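/- Let M ∈ ℕ, σ_1, …, σ_M ∈ {+1, −1}, and let S be the symmetric tridiagonal M×M matrix with S_{jj} = −σ_j(σ_{j−1} + σ_{j+1}) (with σ_0 = σ_{M+1} = 0) and S_{j,j±1} = 1. Let n_0 be the number of negative elements in the sequence {σ_j σ_{j+1}}_{j=1}^{M−1}. Then S has exactly n_0 positive eigenvalues, M − 1 − n_0 negative eigenvalues, and a simple zero eigenvalue, counting multiplicities. -/

import Mathlib

/-- The symmetric tridiagonal matrix `S` with diagonal entries
`S_{jj} = -σ_j (σ_{j-1} + σ_{j+1})` and off-diagonal entries `1`,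
where the sites are indexed by `j = 1, …, M`. -/
def breatherMatrix (M : ℕ) (σ : ℕ → ℝ) : Matrix (Fin M) (Fin M) ℝ :=
  Matrix.of fun j k =>
    if (j : ℕ) = (k : ℕ) then -σ (j + 1) * (σ j + σ (j + 2))
    else if (j : ℕ) + 1 = (k : ℕ) ∨ (k : ℕ) + 1 = (j : ℕ) then 1
    else 0

open Finset in
/-- row formula -/
lemma breather_row (M : ℕ) (σ : ℕ → ℝ) (hσ0 : σ 0 = 0) (X : ℕ → ℝ) (hX : X M = 0) (j : Fin M) :
    (breatherMatrix M σ).mulVec (fun k : Fin M => X k) j =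
      (if 1 ≤ (j : ℕ) then X (j - 1) - σ j * σ (j + 1) * X j else 0)
        + (X (j + 1) - σ (j + 1) * σ (j + 2) * X j) := by
  obtain ⟨j, hj⟩ := j
  have h1 : (breatherMatrix M σ).mulVec (fun k : Fin M => X k) ⟨j, hj⟩ =
      ∑ k ∈ range M, ((if k = j then -σ (j + 1) * (σ j + σ (j + 2)) * X k else 0)
        + (if k = j + 1 then X k else 0) + (if k + 1 = j then X k else 0)) := by
    rw [← Fin.sum_univ_eq_sum_range (fun k => ((if k = j then -σ (j + 1) * (σ j + σ (j + 2)) * X k else 0)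
        + (if k = j + 1 then X k else 0) + (if k + 1 = j then X k else 0)))]
    unfold Matrix.mulVec dotProduct
    refine Finset.sum_congr rfl fun k _ => ?_
    simp only [breatherMatrix, Matrix.of_apply]
    split_ifs <;> first | omega | simp
  rw [h1, sum_add_distrib, sum_add_distrib, sum_ite_eq', sum_ite_eq']
  have h2 : (if j + 1 ∈ range M then X (j + 1) else 0) = X (j + 1) := by
    split_ifs with h
    · rfl
    · have : j + 1 = M := by simp at h; omega
      rw [this, hX]
  rw [h2, if_pos (by simpa using hj)]
  rcases j with _ | j
  · simp [hσ0]; ring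
  · simp only [Nat.add_right_cancel_iff, sum_ite_eq']
    rw [if_pos (by simp; omega)]
    simp
    ring

open Finset in
lemma breather_quad (M : ℕ) (σ : ℕ → ℝ) (X : ℕ → ℝ)
    (hσ : ∀ j, 1 ≤ j → j ≤ M → σ j = 1 ∨ σ j = -1) (m : ℕ) (hm : m < M) :
    ∑ j ∈ range (m + 1), X j * ((if 1 ≤ (j : ℕ) then X (j - 1) - σ j * σ (j + 1) * X j else 0)
        + (X (j + 1) - σ (j + 1) * σ (j + 2) * X j)) =
    - ∑ k ∈ Icc 1 m, σ k * σ (k + 1) * (X (k - 1) - σ k * σ (k + 1) * X k) ^ 2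
      + X m * (X (m + 1) - σ (m + 1) * σ (m + 2) * X m) := by
  induction m with
  | zero => simp
  | succ m ih =>
    rw [sum_range_succ, ih (by omega), sum_Icc_succ_top (by omega)]
    have h1 : (σ (m + 1)) ^ 2 = 1 := by
      rcases hσ (m + 1) (by omega) (by omega) with h | h <;> simp [h]
    have h2 : (σ (m + 1 + 1)) ^ 2 = 1 := by
      rcases hσ (m + 1 + 1) (by omega) (by omega) with h | h <;> simp [h]
    simp only [Nat.add_sub_cancel, if_pos (show 1 ≤ m + 1 by omega)]
    rw [show m + 2 = m + 1 + 1 from rfl]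
    generalize σ (m + 1) = a at *
    generalize σ (m + 1 + 1) = b at *
    have hs : (a * b) ^ 2 = 1 := by rw [mul_pow, h1, h2]; norm_num
    generalize a * b = s at *
    linear_combination (-2 * X m * X (m + 1) + s * X (m + 1) ^ 2) * hs

/-- dimension count -/
lemma eig_card_le {M : ℕ} {A : Matrix (Fin M) (Fin M) ℝ} (hA : A.IsHermitian)
    (p : ℝ → Prop) [DecidablePred p] {K : Type} [Fintype K]
    (f : (Fin M → ℝ) →ₗ[ℝ] (K → ℝ))
    (hf : ∀ x c : Fin M → ℝ, (∀ i, ¬ p (hA.eigenvalues i) → c i = 0) →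
      x ⬝ᵥ A.mulVec x = ∑ i, hA.eigenvalues i * c i ^ 2 →
      ((∀ i, hA.eigenvalues i * c i = 0) → A.mulVec x = 0) →
      (x = 0 → c = 0) → f x = 0 → c = 0) :
    (A.charpoly.roots.filter p).card ≤ Fintype.card K := by
  classical
  have h0 : (A.charpoly.roots.filter p).card = Fintype.card {i // p (hA.eigenvalues i)} := by
    rw [hA.roots_charpoly_eq_eigenvalues, Multiset.filter_map, Multiset.card_map,
      Fintype.card_subtype]
    rfl
  rw [h0]
  let U : Matrix (Fin M) (Fin M) ℝ := hA.eigenvectorUnitary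
  have hU : U.transpose * U = 1 := by
    have := Unitary.coe_star_mul_self hA.eigenvectorUnitary
    simpa [Matrix.star_eq_conjTranspose] using this
  have hAU : A * U = U * Matrix.diagonal hA.eigenvalues := by
    have := hA.spectral_theorem
    have h3 : A = U * Matrix.diagonal hA.eigenvalues * U.transpose := by
      simpa [Unitary.conjStarAlgAut_apply, Matrix.star_eq_conjTranspose, U, Function.comp_def] using this
    conv_lhs => rw [h3]
    rw [Matrix.mul_assoc, hU, Matrix.mul_one]
  let E : ({i // p (hA.eigenvalues i)} → ℝ) →ₗ[ℝ] (Fin M → ℝ) :=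
    { toFun := fun c i => if h : p (hA.eigenvalues i) then c ⟨i, h⟩ else 0
      map_add' := by intro a b; ext i; by_cases h : p (hA.eigenvalues i) <;> simp [h]
      map_smul' := by intro a b; ext i; by_cases h : p (hA.eigenvalues i) <;> simp [h] }
  let g := f ∘ₗ U.mulVecLin ∘ₗ E
  have hg : Function.Injective g := by
    rw [← LinearMap.ker_eq_bot, LinearMap.ker_eq_bot']
    intro c hc
    have hAx : A.mulVec (U.mulVec (E c)) =
        U.mulVec (fun i => hA.eigenvalues i * E c i) := by
      rw [Matrix.mulVec_mulVec, hAU, ← Matrix.mulVec_mulVec]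
      congr 1
      ext i
      rw [Matrix.mulVec_diagonal]
    have key : E c = 0 := by
      refine hf (U.mulVec (E c)) (E c) ?_ ?_ ?_ ?_ hc
      · intro i hi
        simp [E, hi]
      · rw [hAx, Matrix.dotProduct_mulVec, ← Matrix.mulVec_transpose, Matrix.mulVec_mulVec, hU,
          Matrix.one_mulVec]
        refine Finset.sum_congr rfl fun i _ => ?_
        ring
      · intro h
        rw [hAx]
        rw [show (fun i => hA.eigenvalues i * E c i) = 0 from funext h, Matrix.mulVec_zero]
      · intro h
        have := congrArg (U.transpose.mulVec) h
        rwa [Matrix.mulVec_mulVec, hU, Matrix.one_mulVec, Matrix.mulVec_zero] at this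
    ext ⟨i, hi⟩
    have := congrFun key i
    simpa [E, hi] using this
  simpa using LinearMap.finrank_le_finrank_of_injective hg

/-- with `n₀` the number of negative elements of the sequence
`{σ_j σ_{j+1}}_{j=1}^{M-1}`, the matrix `S` has exactly `n₀` positive
eigenvalues, `M - 1 - n₀` negative eigenvalues, and a simple zero eigenvalue,
counting algebraic multiplicities (roots of the characteristic polynomial). -/
theorem stmt4
    (M : ℕ) (hM : 1 ≤ M) (σ : ℕ → ℝ)
    (hσ : ∀ j, 1 ≤ j → j ≤ M → σ j = 1 ∨ σ j = -1)
    (hσ0 : σ 0 = 0) (hσM : σ (M + 1) = 0)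
    (n₀ : ℕ)
    (hn₀ : n₀ = ((Finset.Icc 1 (M - 1)).filter (fun j => σ j * σ (j + 1) = -1)).card) :
    (((breatherMatrix M σ).charpoly.roots.filter (fun γ => 0 < γ)).card = n₀) ∧
    (((breatherMatrix M σ).charpoly.roots.filter (fun γ => γ < 0)).card = M - 1 - n₀) ∧
    ((breatherMatrix M σ).charpoly.roots.count 0 = 1) := by
  classical
  have hA : (breatherMatrix M σ).IsHermitian := by
    ext i j
    simp only [Matrix.conjTranspose_apply, breatherMatrix, Matrix.of_apply, star_trivial]
    by_cases h : (i : ℕ) = j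
    · simp [h]
    · simp only [h, Ne.symm h, if_false, or_comm]
  let ex : (Fin M → ℝ) → ℕ → ℝ := fun x k => if h : k < M then x ⟨k, h⟩ else 0
  have hex : ∀ x, (fun k : Fin M => ex x k) = x := by
    intro x; ext k; simp [ex]
  have hexM : ∀ x, ex x M = 0 := by intro x; simp [ex]
  have hquad : ∀ x, x ⬝ᵥ (breatherMatrix M σ).mulVec x =
      - ∑ k ∈ Finset.Icc 1 (M - 1),
        σ k * σ (k + 1) * (ex x (k - 1) - σ k * σ (k + 1) * ex x k) ^ 2 := by
    intro x
    have h1 := breather_quad M σ (ex x) hσ (M - 1) (by omega)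
    rw [show M - 1 + 1 = M by omega, show M - 1 + 2 = M + 1 by omega, hσM, hexM] at h1
    rw [mul_zero, zero_mul, sub_zero, mul_zero, add_zero] at h1
    rw [← h1, ← Fin.sum_univ_eq_sum_range
        (fun j => ex x j * ((if 1 ≤ (j : ℕ) then ex x (j - 1) - σ j * σ (j + 1) * ex x j else 0)
        + (ex x (j + 1) - σ (j + 1) * σ (j + 2) * ex x j)))]
    conv_lhs => rw [← hex x]
    unfold dotProduct
    refine Finset.sum_congr rfl fun j _ => ?_
    rw [breather_row M σ hσ0 (ex x) (hexM x) j]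
  have hs : ∀ k ∈ Finset.Icc 1 (M - 1), σ k * σ (k + 1) = 1 ∨ σ k * σ (k + 1) = -1 := by
    intro k hk
    rw [Finset.mem_Icc] at hk
    rcases hσ k (by omega) (by omega) with h | h <;>
      rcases hσ (k + 1) (by omega) (by omega) with h' | h' <;> simp [h, h']
  let F : (r : ℝ) → (Fin M → ℝ) →ₗ[ℝ]
      ({k // k ∈ (Finset.Icc 1 (M - 1)).filter (fun j => σ j * σ (j + 1) = r)} → ℝ) := fun r =>
    { toFun := fun x k => ex x (k - 1) - σ k * σ (k + 1) * ex x k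
      map_add' := by
        intro a b; ext k
        simp only [ex, Pi.add_apply]
        split_ifs <;> ring
      map_smul' := by
        intro a b; ext k
        simp only [ex, Pi.smul_apply, smul_eq_mul, RingHom.id_apply]
        split_ifs <;> ring }
  have hF : ∀ r x, F r x = 0 → ∀ k ∈ Finset.Icc 1 (M - 1), σ k * σ (k + 1) = r →
      ex x (k - 1) - σ k * σ (k + 1) * ex x k = 0 := by
    intro r x h k hk hr
    exact congrFun h ⟨k, Finset.mem_filter.2 ⟨hk, hr⟩⟩
  have hpos : ((breatherMatrix M σ).charpoly.roots.filter (fun γ => 0 < γ)).card ≤ n₀ := by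
    have := eig_card_le hA (fun γ => 0 < γ) (F (-1)) ?_
    · rwa [Fintype.card_coe, ← hn₀] at this
    intro x c hc hq _ _ hfx
    rw [hquad] at hq
    have hnn : ∀ i ∈ Finset.univ, 0 ≤ hA.eigenvalues i * c i ^ 2 := by
      intro i _
      by_cases h : 0 < hA.eigenvalues i
      · positivity
      · simp [hc i h]
    have h0 : ∑ i, hA.eigenvalues i * c i ^ 2 = 0 := by
      refine le_antisymm ?_ (Finset.sum_nonneg hnn)
      rw [← hq, neg_nonpos]
      refine Finset.sum_nonneg fun k hk => ?_
      rcases hs k hk with h | h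
      · rw [h]; positivity
      · rw [hF _ x hfx k hk h]; simp
    rw [Finset.sum_eq_zero_iff_of_nonneg hnn] at h0
    ext i
    by_cases h : 0 < hA.eigenvalues i
    · have := h0 i (Finset.mem_univ i)
      simpa [h.ne'] using this
    · exact hc i h
  have hneg : ((breatherMatrix M σ).charpoly.roots.filter (fun γ => γ < 0)).card ≤
      ((Finset.Icc 1 (M - 1)).filter (fun j => σ j * σ (j + 1) = 1)).card := by
    have := eig_card_le hA (fun γ => γ < 0) (F 1) ?_
    · rwa [Fintype.card_coe] at this
    intro x c hc hq _ _ hfx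
    rw [hquad] at hq
    have hnn : ∀ i ∈ Finset.univ, hA.eigenvalues i * c i ^ 2 ≤ 0 := by
      intro i _
      by_cases h : hA.eigenvalues i < 0
      · exact mul_nonpos_of_nonpos_of_nonneg h.le (sq_nonneg _)
      · simp [hc i h]
    have h0 : ∑ i, hA.eigenvalues i * c i ^ 2 = 0 := by
      refine le_antisymm (Finset.sum_nonpos hnn) ?_
      rw [← hq, neg_nonneg]
      refine Finset.sum_nonpos fun k hk => ?_
      rcases hs k hk with h | h
      · rw [hF _ x hfx k hk h]; simp
      · rw [h]; linarith [sq_nonneg (ex x (k - 1) - -1 * ex x k)]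
    rw [Finset.sum_eq_zero_iff_of_nonpos hnn] at h0
    ext i
    by_cases h : hA.eigenvalues i < 0
    · have := h0 i (Finset.mem_univ i)
      simpa [h.ne] using this
    · exact hc i h
  have hzero : ((breatherMatrix M σ).charpoly.roots.filter (fun γ => γ = 0)).card ≤ 1 := by
    have := eig_card_le hA (fun γ => γ = 0) (K := Unit)
      (LinearMap.pi fun _ => LinearMap.proj (⟨0, hM⟩ : Fin M)) ?_
    · simpa using this
    intro x c hc _ hker hinj hfx
    have hx0 : ex x 0 = 0 := by
      have := congrFun hfx ()
      simp only [LinearMap.pi_apply, LinearMap.proj_apply] at this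
      simp only [ex]
      rw [dif_pos (show 0 < M from hM)]
      exact this
    have hAx := hker (by
      intro i
      by_cases h : hA.eigenvalues i = 0
      · simp [h]
      · simp [hc i h])
    have hrow : ∀ j, j < M →
      (if 1 ≤ j then ex x (j - 1) - σ j * σ (j + 1) * ex x j else 0)
        + (ex x (j + 1) - σ (j + 1) * σ (j + 2) * ex x j) = 0 := by
      intro j hj
      have := breather_row M σ hσ0 (ex x) (hexM x) ⟨j, hj⟩
      rw [hex, hAx] at this
      exact this.symm
    have hall : ∀ j, ex x j = 0 ∧ ex x (j + 1) = 0 := by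
      intro j
      induction j with
      | zero =>
        refine ⟨hx0, ?_⟩
        have := hrow 0 hM
        simpa [hx0] using this
      | succ j ih =>
        refine ⟨ih.2, ?_⟩
        by_cases hj : j + 1 < M
        · have := hrow (j + 1) hj
          simpa [ih.1, ih.2] using this
        · simp only [ex]
          rw [dif_neg (by omega)]
    apply hinj
    rw [← hex x]
    ext k
    exact (hall k).1
  have hzero' : ((breatherMatrix M σ).charpoly.roots.filter (fun γ => γ = 0)).card =
      (breatherMatrix M σ).charpoly.roots.count 0 := by
    rw [Multiset.filter_eq', Multiset.card_replicate]
  have htot : ((breatherMatrix M σ).charpoly.roots.filter (fun γ => 0 < γ)).card +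
      ((breatherMatrix M σ).charpoly.roots.filter (fun γ => γ < 0)).card +
      ((breatherMatrix M σ).charpoly.roots.filter (fun γ => γ = 0)).card = M := by
    have hc : (breatherMatrix M σ).charpoly.roots.card = M := by
      rw [hA.roots_charpoly_eq_eigenvalues]; simp
    conv_rhs => rw [← hc]
    generalize (breatherMatrix M σ).charpoly.roots = R
    induction R using Multiset.induction_on with
    | empty => simp
    | cons a R ih =>
      rw [Multiset.card_cons, ← ih]
      rcases lt_trichotomy a 0 with h | h | h
      · simp [h, h.ne, h.le]; omega
      · simp [h]; omega
      · simp [h, h.ne', h.le]; omega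
  have hcard : ((Finset.Icc 1 (M - 1)).filter (fun j => σ j * σ (j + 1) = 1)).card + n₀ = M - 1 := by
    rw [hn₀]
    have h := Finset.card_filter_add_card_filter_not (s := Finset.Icc 1 (M - 1))
      (fun j => σ j * σ (j + 1) = 1)
    rw [Nat.card_Icc, Nat.add_sub_cancel] at h
    refine Eq.trans ?_ h
    congr 2
    refine Finset.filter_congr fun k hk => ?_
    rcases hs k hk with h | h <;> rw [h] <;> norm_num
  rw [← hzero']
  omega
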